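/- arXiv:math/0701172 — 7 statements merged into one kernel-verified Lean document; each statement's English description precedes it below -/
import Mathlib

section
/- Let Y be a connected topological space, let U and V be open subsets of Y, and let h : Y → Y be a homeomorphism. Assume that the frontier of V is nonempty, that h maps the frontier of V into U, and that the image h '' (closure V) is disjoint from the frontier of U. Then h '' (closure V) ⊆ U. -/
/-!
The set of points of `closure V` that `f` sends outside `U` is clopen. Since `f` avoids `frontier U`
on `closure V`, being sent outside `U` is there both the closed condition of being sent outside
`interior U` and the open condition of being sent outside `closure U`; since `f` sends `frontier V`
into `U`, all such points lie in the open set `interior V`. By connectedness this set is empty or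
everything, and it misses the nonempty set `frontier V`.
-/

open Set

section

variable {X Y : Type*} [TopologicalSpace Y] {f : X → Y} {s : Set X} {U : Set Y}

theorem sdiff_preimage_interior_of_disjoint_frontier (hsU : Disjoint (f '' s) (frontier U)) :
    s \ f ⁻¹' interior U = s \ f ⁻¹' U := by
  refine Subset.antisymm ?_ (sdiff_subset_sdiff_right (preimage_mono interior_subset))
  rintro x ⟨hxs, hx_interior⟩
  have hx_frontier : f x ∉ frontier U := disjoint_left.mp hsU (mem_image_of_mem f hxs)
  have hx : f x ∉ U := fun hxU => hx_frontier ⟨subset_closure hxU, hx_interior⟩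
  exact ⟨hxs, hx⟩

theorem sdiff_preimage_closure_of_disjoint_frontier (hsU : Disjoint (f '' s) (frontier U)) :
    s \ f ⁻¹' closure U = s \ f ⁻¹' U := by
  refine Subset.antisymm (sdiff_subset_sdiff_right (preimage_mono subset_closure)) ?_
  rintro x ⟨hxs, hxU⟩
  have hx_frontier : f x ∉ frontier U := disjoint_left.mp hsU (mem_image_of_mem f hxs)
  have hx_closure : f x ∉ closure U := fun hx =>
    hx_frontier ⟨hx, fun hx_interior => hxU (interior_subset (s := U) hx_interior)⟩
  exact ⟨hxs, hx_closure⟩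

end

theorem closure_sdiff_eq_interior_sdiff {X : Type*} [TopologicalSpace X] {s t : Set X}
    (hst : frontier s ⊆ t) : closure s \ t = interior s \ t := by
  rw [closure_eq_interior_union_frontier, union_sdiff_distrib, sdiff_eq_empty.mpr hst, union_empty]

section

variable {X Y : Type*} [TopologicalSpace X] [TopologicalSpace Y] {f : X → Y} {s : Set X} {U : Set Y}

theorem isClosed_sdiff_preimage_of_disjoint_frontier (hs : IsClosed s) (hf : ContinuousOn f s)
    (hsU : Disjoint (f '' s) (frontier U)) : IsClosed (s \ f ⁻¹' U) := by
  rw [← sdiff_preimage_interior_of_disjoint_frontier hsU]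
  exact hf.preimage_isClosed_of_isClosed hs isOpen_interior.isClosed_compl

theorem isOpen_sdiff_preimage_of_disjoint_frontier (hs : IsOpen s) (hf : ContinuousOn f s)
    (hsU : Disjoint (f '' s) (frontier U)) : IsOpen (s \ f ⁻¹' U) := by
  rw [← sdiff_preimage_closure_of_disjoint_frontier hsU]
  exact hf.isOpen_inter_preimage hs isClosed_closure.isOpen_compl

theorem isClopen_closure_sdiff_preimage (hf : ContinuousOn f (closure s))
    (hfs : f '' frontier s ⊆ U) (hsU : Disjoint (f '' closure s) (frontier U)) :
    IsClopen (closure s \ f ⁻¹' U) := by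
  refine ⟨isClosed_sdiff_preimage_of_disjoint_frontier isClosed_closure hf hsU, ?_⟩
  rw [closure_sdiff_eq_interior_sdiff (image_subset_iff.mp hfs)]
  exact isOpen_sdiff_preimage_of_disjoint_frontier isOpen_interior
    (hf.mono interior_subset_closure) (hsU.mono_left (image_mono interior_subset_closure))

theorem stmt_1_general [PreconnectedSpace X] {V : Set X} (hf : ContinuousOn f (closure V))
    (hne : (frontier V).Nonempty) (hfV : f '' frontier V ⊆ U)
    (hUV : Disjoint (f '' closure V) (frontier U)) : f '' closure V ⊆ U := by
  have hclopen : IsClopen (closure V \ f ⁻¹' U) := isClopen_closure_sdiff_preimage hf hfV hUV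
  have hne_univ : closure V \ f ⁻¹' U ≠ univ := by
    obtain ⟨x, hx⟩ := hne
    exact (ne_univ_iff_exists_notMem _).mpr ⟨x, fun hx' => hx'.2 (hfV (mem_image_of_mem f hx))⟩
  have hempty : closure V \ f ⁻¹' U = ∅ := (isClopen_iff.mp hclopen).resolve_right hne_univ
  exact image_subset_iff.mpr (sdiff_eq_empty.mp hempty)

end

/-- The connectedness argument in the proof of Proposition 1.1.3: if `Y` is connected,
`U`, `V` are open, `h` is a homeomorphism of `Y`, the frontier of `V` is nonempty,
`h` maps the frontier of `V` into `U`, and `h '' closure V` is disjoint from the frontier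
of `U`, then `h '' closure V ⊆ U`. -/
theorem stmt_1 {Y : Type*} [TopologicalSpace Y] [ConnectedSpace Y]
    (U V : Set Y) (hU : IsOpen U) (hV : IsOpen V) (h : Y ≃ₜ Y)
    (hne : (frontier V).Nonempty)
    (h1 : h '' frontier V ⊆ U)
    (h2 : Disjoint (h '' closure V) (frontier U)) :
    h '' closure V ⊆ U :=
  stmt_1_general h.continuous.continuousOn hne h1 h2
end

section
/- Let G be a group acting on a topological space X such that for every g ∈ G the map x ↦ g • x is a homeomorphism of X. Let F ⊆ X be an open set with G • F = X, and let 𝒰 be a locally finite family of subsets of X with the property that for every U ∈ 𝒰 and every g ∈ G, if (g • U) ∩ F ≠ ∅ then g • U ∈ 𝒰. Then the family of sets 𝒞 = {g • U | g ∈ G, U ∈ 𝒰} is locally finite in X. -/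
open Pointwise

/-! On a translate `g • F`, the family `𝒞` is controlled by the translated family `g • 𝒰`: a member
`h • U` of `𝒞` that meets `g • F` is `g • (g⁻¹h • U)`, where `g⁻¹h • U` meets `F` and so belongs
to `𝒰`. Since `g • 𝒰` is locally finite and the open sets `g • F` cover `X`, local finiteness
of `𝒞` follows. -/

open scoped Topology

section

variable {X : Type*} [TopologicalSpace X]

theorem locallyFinite_coe_of_forall_exists_mem_nhds {𝒞 : Set (Set X)}
    (h : ∀ x, ∃ s ∈ 𝓝 x, ∃ 𝒱 : Set (Set X), LocallyFinite ((↑) : 𝒱 → Set X) ∧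
      ∀ C ∈ 𝒞, (C ∩ s).Nonempty → C ∈ 𝒱) :
    LocallyFinite ((↑) : 𝒞 → Set X) := by
  intro x
  obtain ⟨s, hs, 𝒱, h𝒱, hmem⟩ := h x
  obtain ⟨t, ht, hfin⟩ := h𝒱 x
  have hfin_sets : ((↑) '' {V : 𝒱 | ((V : Set X) ∩ t).Nonempty} : Set (Set X)).Finite :=
    hfin.image _
  refine ⟨s ∩ t, Filter.inter_mem hs ht,
    (hfin_sets.preimage Subtype.val_injective.injOn).subset ?_⟩
  rintro ⟨C, hC⟩ ⟨y, hyC, hys, hyt⟩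
  exact ⟨⟨C, hmem C hC ⟨y, hyC, hys⟩⟩, ⟨y, hyC, hyt⟩, rfl⟩

variable {G : Type*} [Group G] [MulAction G X] [ContinuousConstSMul G X]

theorem locallyFinite_smul {ι : Type*} {f : ι → Set X} (hf : LocallyFinite f) (g : G) :
    LocallyFinite fun i => g • f i := by
  simpa only [Set.preimage_smul_inv] using hf.preimage_continuous (continuous_const_smul g⁻¹)

theorem locallyFinite_coe_smul_set {𝒰 : Set (Set X)} (h𝒰 : LocallyFinite ((↑) : 𝒰 → Set X))
    (g : G) : LocallyFinite ((↑) : (g • 𝒰 : Set (Set X)) → Set X) := by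
  have hrange : Set.range (fun U : 𝒰 => g • (U : Set X)) = g • 𝒰 := by
    rw [← Set.image_smul, Set.image_eq_range]
  exact hrange ▸ (locallyFinite_smul h𝒰 g).on_range

end

theorem smul_mem_smul_set_of_inter_smul_nonempty {G X : Type*} [Group G] [MulAction G X]
    {F : Set X} {𝒰 : Set (Set X)}
    (h𝒰 : ∀ U ∈ 𝒰, ∀ g : G, (g • U ∩ F).Nonempty → g • U ∈ 𝒰)
    {U : Set X} (hU : U ∈ 𝒰) {g h : G} (hmeet : (h • U ∩ g • F).Nonempty) :
    h • U ∈ g • 𝒰 := by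
  have hmeet_F : ((g⁻¹ * h) • U ∩ F).Nonempty := by
    rwa [← Set.smul_set_nonempty (a := g), Set.smul_set_inter, smul_smul, mul_inv_cancel_left]
  rw [Set.mem_smul_set_iff_inv_smul_mem, smul_smul]
  exact h𝒰 U hU (g⁻¹ * h) hmeet_F

/-- Section 3.4: if `F` is open with `G • F = X` and `𝒰` is a locally finite family of
subsets of `X` such that `g • U ∈ 𝒰` whenever `U ∈ 𝒰` and `(g • U) ∩ F ≠ ∅`, then the
family `𝒞 = {g • U | g ∈ G, U ∈ 𝒰}` is locally finite. -/
theorem stmt_3 {G X : Type*} [Group G] [TopologicalSpace X] [MulAction G X]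
    (hcont : ∀ g : G, Continuous fun x : X => g • x)
    (F : Set X) (hF : IsOpen F) (hcov : (⋃ g : G, g • F) = Set.univ)
    (𝒰 : Set (Set X)) (hlf : LocallyFinite (fun U : 𝒰 => (U : Set X)))
    (hprop : ∀ U ∈ 𝒰, ∀ g : G, (g • U) ∩ F ≠ ∅ → g • U ∈ 𝒰) :
    LocallyFinite (fun C : {C : Set X // ∃ g : G, ∃ U ∈ 𝒰, C = g • U} => (C : Set X)) := by
  have : ContinuousConstSMul G X := ⟨hcont⟩
  refine locallyFinite_coe_of_forall_exists_mem_nhds fun x => ?_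
  obtain ⟨g, hxg⟩ : ∃ g : G, x ∈ g • F := Set.mem_iUnion.mp (hcov ▸ Set.mem_univ x)
  refine ⟨g • F, (hF.smul g).mem_nhds hxg, g • 𝒰, locallyFinite_coe_smul_set hlf g, ?_⟩
  rintro _ ⟨h, U, hU, rfl⟩ hmeet
  exact smul_mem_smul_set_of_inter_smul_nonempty
    (fun U hU g hne => hprop U hU g hne.ne_empty) hU hmeet
end

section
/- Let X be a normal Hausdorff topological space and G a group acting on X such that for every g ∈ G the map x ↦ g • x is a homeomorphism. Let I be an index set and U, V, W : I → Set X with each U i and V i open, closure (W i) ⊆ V i, and closure (V i) ⊆ U i for all i. Assume that the family (g, i) ↦ g • closure (W i) (indexed by G × I) covers X and is locally finite, and that the family (g, i) ↦ g • U i is locally finite. Then there exists a family of continuous functions φ : G × I → X → ℝ such that: (a) 0 ≤ φ (g,i) x ≤ 1 for all g, i, x; (b) φ (g,i) x = 0 whenever x ∉ g • V i; (c) for every x ∈ X only finitely many of the values φ (g,i) x are nonzero and their sum equals 1; and (d) φ (g,i) x = φ (1,i) (g⁻¹ • x) for all g ∈ G, i ∈ I, x ∈ X (equivariance: φ_{gU}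 = φ_U ∘ g⁻¹). -/
open Pointwise

/-!
Choose Urysohn functions `f i` equal to `1` on `closure (W i)` and to `0` off `V i`, and translate
them to `ψ (g, i) = f i ∘ g⁻¹`. Translating by `g` only permutes the `ψ p`, so their locally finite
sum is a `G`-invariant positive function, and dividing by it preserves equivariance.
`BumpCovering.toPartitionOfUnity` would not do, as it depends on a well-order of the index set.
-/

open Function Set

section Normalization

variable {ι X : Type*} [TopologicalSpace X]

/-- The partition of unity `f i / ∑ j, f j` obtained by normalizing a locally finite family of
nonnegative continuous functions without common zeros. -/
noncomputable def normalizedPartitionOfUnity (f : ι → C(X, ℝ))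
    (hf : LocallyFinite fun i => support (f i)) (hf_nonneg : ∀ i x, 0 ≤ f i x)
    (hf_pos : ∀ x, ∃ i, 0 < f i x) : PartitionOfUnity ι X :=
  have sum_pos (x : X) : 0 < ∑ᶠ i, f i x :=
    finsum_pos (hf_nonneg · x) (hf_pos x) (hf.point_finite x)
  have sum_div (x : X) : ∑ᶠ i, f i x / ∑ᶠ j, f j x = 1 := by
    simp only [div_eq_mul_inv]
    rw [← finsum_mul, mul_inv_cancel₀ (sum_pos x).ne']
  { toFun i :=
      { toFun x := f i x / ∑ᶠ j, f j x
        continuous_toFun := (f i).continuous.div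
          (continuous_finsum (fun j => (f j).continuous) hf) fun x => (sum_pos x).ne' }
    locallyFinite' := hf.subset fun _ _ hx => (div_ne_zero_iff.1 hx).1
    nonneg' i x := div_nonneg (hf_nonneg i x) (sum_pos x).le
    sum_eq_one' x _ := sum_div x
    sum_le_one' x := (sum_div x).le }

variable {f : ι → C(X, ℝ)} (hf : LocallyFinite fun i => support (f i))
  (hf_nonneg : ∀ i x, 0 ≤ f i x) (hf_pos : ∀ x, ∃ i, 0 < f i x)

theorem support_normalizedPartitionOfUnity_subset (i : ι) :
    support (normalizedPartitionOfUnity f hf hf_nonneg hf_pos i) ⊆ support (f i) :=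
  fun _ hx => (div_ne_zero_iff.1 hx).1

theorem normalizedPartitionOfUnity_apply_perm (e : Equiv.Perm ι) {x y : X}
    (h : ∀ j, f (e j) x = f j y) (i : ι) :
    normalizedPartitionOfUnity f hf hf_nonneg hf_pos (e i) x =
      normalizedPartitionOfUnity f hf hf_nonneg hf_pos i y := by
  have sum_eq : ∑ᶠ j, f j x = ∑ᶠ j, f j y := by
    rw [← finsum_comp_equiv e]
    exact finsum_congr h
  exact congrArg₂ (· / ·) (h i) sum_eq

end Normalization

section Translates

variable {G X Y I : Type*} [Group G] [TopologicalSpace X] [TopologicalSpace Y] [MulAction G X]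
  [ContinuousConstSMul G X]

/-- The family of all translates `f i ∘ g⁻¹`, indexed by the pairs `(g, i)`, of a family of
continuous functions `f i` on a `G`-space. -/
def translates (f : I → C(X, Y)) (p : G × I) : C(X, Y) :=
  (f p.2).comp ⟨(p.1⁻¹ • ·), continuous_const_smul _⟩

theorem translates_apply (f : I → C(X, Y)) (p : G × I) (x : X) :
    translates f p x = f p.2 (p.1⁻¹ • x) :=
  rfl

theorem translates_mul_apply (f : I → C(X, Y)) (g : G) (p : G × I) (x : X) :
    translates f (g * p.1, p.2) x = translates f p (g⁻¹ • x) := by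
  simp only [translates_apply, mul_inv_rev, mul_smul]

theorem support_translates [Zero Y] (f : I → C(X, Y)) (p : G × I) :
    support (translates f p) = p.1 • support (f p.2) := by
  ext x
  simp only [mem_smul_set_iff_inv_smul_mem, mem_support, translates_apply]

theorem exists_partitionOfUnity_equivariant (f : I → C(X, ℝ))
    (hf : LocallyFinite fun p : G × I => p.1 • support (f p.2))
    (hf_nonneg : ∀ i x, 0 ≤ f i x) (hf_pos : ∀ x, ∃ p : G × I, x ∈ p.1 • support (f p.2)) :
    ∃ ρ : PartitionOfUnity (G × I) X, (∀ p, support (ρ p) ⊆ p.1 • support (f p.2)) ∧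
      ∀ (g : G) (i : I) (x : X), ρ (g, i) x = ρ (1, i) (g⁻¹ • x) := by
  simp only [← support_translates] at hf hf_pos ⊢
  have nonneg (p : G × I) (x : X) : 0 ≤ translates f p x := hf_nonneg _ _
  have pos (x : X) : ∃ p : G × I, 0 < translates f p x :=
    (hf_pos x).imp fun p hp => (nonneg p x).lt_of_ne' hp
  refine ⟨normalizedPartitionOfUnity (translates f) hf nonneg pos,
    support_normalizedPartitionOfUnity_subset hf nonneg pos, fun g i x => ?_⟩
  simpa using normalizedPartitionOfUnity_apply_perm hf nonneg pos
    ((Equiv.mulLeft g).prodCongr (Equiv.refl I)) (fun p => translates_mul_apply f g p x) (1, i)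

end Translates

theorem exists_continuous_nonneg_subset_support_subset {X : Type*} [TopologicalSpace X]
    [NormalSpace X] {F V : Set X} (hF : IsClosed F) (hV : IsOpen V) (hFV : F ⊆ V) :
    ∃ f : C(X, ℝ), (∀ x, 0 ≤ f x) ∧ F ⊆ support f ∧ support f ⊆ V := by
  obtain ⟨f, hf_zero, hf_one, hf_mem⟩ := exists_continuous_zero_one_of_isClosed
    hV.isClosed_compl hF (disjoint_compl_left_iff_subset.2 hFV)
  refine ⟨f, fun x => (hf_mem x).1, fun x hx => ?_, support_subset_iff'.2 hf_zero⟩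
  exact mem_support.2 (hf_one hx ▸ one_ne_zero)

theorem stmt_4_general {G X I : Type*} [Group G] [TopologicalSpace X] [NormalSpace X]
    [MulAction G X] [ContinuousConstSMul G X] (V F : I → Set X)
    (hV : ∀ i, IsOpen (V i)) (hF : ∀ i, IsClosed (F i)) (hFV : ∀ i, F i ⊆ V i)
    (hcov : (⋃ p : G × I, p.1 • F p.2) = univ)
    (hlf : LocallyFinite fun p : G × I => p.1 • V p.2) :
    ∃ ρ : PartitionOfUnity (G × I) X, (∀ p, support (ρ p) ⊆ p.1 • V p.2) ∧
      ∀ (g : G) (i : I) (x : X), ρ (g, i) x = ρ (1, i) (g⁻¹ • x) := by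
  choose f hf_nonneg hFf hfV using fun i =>
    exists_continuous_nonneg_subset_support_subset (hF i) (hV i) (hFV i)
  have smul_support_subset (p : G × I) : p.1 • support (f p.2) ⊆ p.1 • V p.2 :=
    smul_set_mono (hfV p.2)
  have exists_mem (x : X) : ∃ p : G × I, x ∈ p.1 • support (f p.2) :=
    (iUnion_eq_univ_iff.1 hcov x).imp fun p hp => smul_set_mono (hFf p.2) hp
  obtain ⟨ρ, hρ, hρ_equivariant⟩ := exists_partitionOfUnity_equivariant f
    (hlf.subset smul_support_subset) hf_nonneg exists_mem
  exact ⟨ρ, fun p => (hρ p).trans (smul_support_subset p), hρ_equivariant⟩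

/-- Lemma 4.1: existence of a `G`-equivariant partition of unity subordinated to the
invariant locally finite cover by the translates `g • U i`, with shrinkings `V i`, `W i`. -/
theorem stmt_4 {G X : Type*} [Group G] [TopologicalSpace X] [NormalSpace X] [T2Space X]
    [MulAction G X]
    (hcont : ∀ g : G, Continuous fun x : X => g • x)
    {I : Type*} (U V W : I → Set X)
    (hUo : ∀ i, IsOpen (U i)) (hVo : ∀ i, IsOpen (V i))
    (hWV : ∀ i, closure (W i) ⊆ V i) (hVU : ∀ i, closure (V i) ⊆ U i)
    (hcov : (⋃ p : G × I, p.1 • closure (W p.2)) = Set.univ)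
    (hlfW : LocallyFinite (fun p : G × I => p.1 • closure (W p.2)))
    (hlfU : LocallyFinite (fun p : G × I => p.1 • U p.2)) :
    ∃ φ : G × I → X → ℝ,
      (∀ p, Continuous (φ p)) ∧
      (∀ p x, 0 ≤ φ p x ∧ φ p x ≤ 1) ∧
      (∀ p x, x ∉ p.1 • V p.2 → φ p x = 0) ∧
      (∀ x, {p : G × I | φ p x ≠ 0}.Finite ∧ ∑ᶠ p : G × I, φ p x = 1) ∧
      (∀ (g : G) (i : I) (x : X), φ (g, i) x = φ (1, i) (g⁻¹ • x)) := by
  have : ContinuousConstSMul G X := ⟨hcont⟩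
  have hlfV : LocallyFinite fun p : G × I => p.1 • V p.2 :=
    hlfU.subset fun p => smul_set_mono (subset_closure.trans (hVU p.2))
  obtain ⟨ρ, hρV, hρ_equivariant⟩ :=
    stmt_4_general V (fun i => closure (W i)) hVo (fun _ => isClosed_closure) hWV hcov hlfV
  exact ⟨fun p => ρ p, fun p => (ρ p).continuous, fun p x => ⟨ρ.nonneg p x, ρ.le_one p x⟩,
    fun p => support_subset_iff'.1 (hρV p),
    fun x => ⟨ρ.locallyFinite.point_finite x, ρ.sum_eq_one (mem_univ x)⟩, hρ_equivariant⟩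
end

section
/- Let X and Y be locally compact Hausdorff spaces and f : X → Y a continuous proper map. Let βf : StoneCech X → StoneCech Y be the canonical continuous extension of stoneCechUnit ∘ f (obtained from the universal property of the Stone–Čech compactification). Then βf maps the remainder into the remainder: for every p ∈ StoneCech X not in the range of stoneCechUnit : X → StoneCech X, the point βf p is not in the range of stoneCechUnit : Y → StoneCech Y. -/
/-!
If `βf p = y` lies in `Y`, then `f` tends to `y` along the trace on `X` of the neighbourhoods of
`p`, because `Y` carries the topology induced from `βY`. Since `f` is proper, this trace has a
cluster point `x` in `X`; its image in `βX` must be `p`, because `βX` is Hausdorff.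
-/

open Filter Set Topology

section Extension

variable {X Y X' Y' : Type*} [TopologicalSpace Y] [TopologicalSpace X'] [TopologicalSpace Y']
  {f : X → Y} {i : X → X'} {j : Y → Y'} {F : X' → Y'}

theorem tendsto_comap_nhds_of_comp_eq_comp {p : X'} {y : Y} (hj : IsInducing j)
    (hF : ContinuousAt F p) (hcomm : F ∘ i = j ∘ f) (hy : F p = j y) :
    Tendsto f (comap i (𝓝 p)) (𝓝 y) := by
  rw [hj.tendsto_nhds_iff, ← hcomm, ← hy]
  exact hF.tendsto.comp tendsto_comap

variable [TopologicalSpace X] [T2Space X']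

theorem eq_of_clusterPt_comap_nhds {x : X} {p : X'} (hi : ContinuousAt i x)
    (hx : ClusterPt x (comap i (𝓝 p))) : i x = p :=
  eq_of_nhds_neBot (hx.map hi tendsto_comap)

theorem preimage_range_eq_range_of_isProperMap (hf : IsProperMap f) (hi : Continuous i)
    (hi_dense : DenseRange i) (hj : IsInducing j) (hF : Continuous F)
    (hcomm : F ∘ i = j ∘ f) : F ⁻¹' range j = range i := by
  refine Subset.antisymm ?_ (range_subset_iff.2 fun x ↦ ⟨f x, (congrFun hcomm x).symm⟩)
  rintro p ⟨y, hy⟩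
  have : (comap i (𝓝 p)).NeBot :=
    comap_neBot_iff_frequently.2 (mem_closure_iff_frequently.1 (hi_dense p))
  have hlim : Tendsto f (comap i (𝓝 p)) (𝓝 y) :=
    tendsto_comap_nhds_of_comp_eq_comp hj hF.continuousAt hcomm hy.symm
  obtain ⟨x, -, hx⟩ := hf.clusterPt_of_mapClusterPt hlim.mapClusterPt
  exact ⟨x, eq_of_clusterPt_comap_nhds hi.continuousAt hx⟩

end Extension

theorem completelyRegularSpace_of_weaklyLocallyCompactSpace (X : Type*) [TopologicalSpace X]
    [WeaklyLocallyCompactSpace X] [T2Space X] : CompletelyRegularSpace X :=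
  OnePoint.isOpenEmbedding_coe.isInducing.completelyRegularSpace

theorem stoneCechExtend_preimage_range_stoneCechUnit {X Y : Type*} [TopologicalSpace X]
    [TopologicalSpace Y] [CompletelyRegularSpace Y] {f : X → Y} (hf : IsProperMap f) :
    stoneCechExtend (continuous_stoneCechUnit.comp hf.continuous) ⁻¹'
      range (stoneCechUnit : Y → StoneCech Y) = range (stoneCechUnit : X → StoneCech X) :=
  preimage_range_eq_range_of_isProperMap hf continuous_stoneCechUnit denseRange_stoneCechUnit
    isInducing_stoneCechUnit (continuous_stoneCechExtend _) (stoneCechExtend_extends _)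

theorem stmt_8_general {X Y : Type*} [TopologicalSpace X] [TopologicalSpace Y]
    [CompletelyRegularSpace Y] {f : X → Y} (hf : IsProperMap f) (p : StoneCech X)
    (hp : p ∉ Set.range (stoneCechUnit : X → StoneCech X)) :
    stoneCechExtend (continuous_stoneCechUnit.comp hf.continuous) p ∉
      Set.range (stoneCechUnit : Y → StoneCech Y) := by
  rwa [← mem_preimage, stoneCechExtend_preimage_range_stoneCechUnit hf]

/-- Proposition 1.1.2 (Stone–Čech level): the extension of a proper map between locally
compact Hausdorff spaces to the Stone–Čech compactifications maps the remainder into the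
remainder. -/
theorem stmt_8 {X Y : Type*} [TopologicalSpace X] [TopologicalSpace Y]
    [LocallyCompactSpace X] [T2Space X] [LocallyCompactSpace Y] [T2Space Y]
    {f : X → Y} (hf : IsProperMap f) (p : StoneCech X)
    (hp : p ∉ Set.range (stoneCechUnit : X → StoneCech X)) :
    stoneCechExtend (continuous_stoneCechUnit.comp hf.continuous) p ∉
      Set.range (stoneCechUnit : Y → StoneCech Y) := by
  have := completelyRegularSpace_of_weaklyLocallyCompactSpace Y
  exact stmt_8_general hf p hp
end

section
/- Let Λ be a directed partial order and (Y λ) a family of compact Hausdorff spaces indexed by Λ, with continuous bonding maps q κ λ : Y λ → Y κ for κ ≤ λ satisfying q λ λ = id and q κ λ ∘ q λ μ = q κ μ for κ ≤ λ ≤ μ. Let D λ ⊆ Y λ be subsets such that: (a) each D λ is dense in Y λ; (b) for all κ ≤ λ, the image q κ λ '' (D λ) equals D κ; and (c) for all κ ≤ λ and every d ∈ D κ, the fiber {y ∈ D λ | q κ λ y = d} is compact. Let L = {y : Π λ, Y λ | ∀ κ ≤ λ, q κ λ (y λ) = y κ} be the inverse limit, with the subspace topology from the product. Then the set {y ∈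 L | ∀ λ, y λ ∈ D λ} is dense in L. -/
/-!
Fix a thread `y` and an open `W ∋ y k`. By density of `D k` there is `d ∈ D k ∩ W`. The fibers
of `D m` over `d`, for `m ≥ k`, form an inverse system of nonempty compact Hausdorff spaces, hence
have a common thread; it extends from the final segment above `k` to a thread of the whole system
lying in all the `D l`. By directedness the sets `{z | z k ∈ W}` form a neighborhood basis of `y`.
-/

open CategoryTheory Set Topology

section InverseLimit

universe u v

variable {Λ : Type u} [Preorder Λ] {Y : Λ → Type v} {f : ∀ ⦃κ l : Λ⦄, κ ≤ l → Y l → Y κ}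

/-- The threads of an inverse system `f`: the points of its inverse limit, as a subset of the
product. (Mathlib's `InverseSystem.limit` only covers the subsystems indexed by some `Iio i`.) -/
def threads (f : ∀ ⦃κ l : Λ⦄, κ ≤ l → Y l → Y κ) : Set (∀ l, Y l) :=
  {y | ∀ κ l (h : κ ≤ l), f h (y l) = y κ}

theorem isDirectedOrder_subtype_ge [IsDirectedOrder Λ] (k : Λ) :
    IsDirectedOrder {m : Λ // k ≤ m} where
  directed m n :=
    have ⟨p, hmp, hnp⟩ := exists_ge_ge m.1 n.1
    ⟨⟨p, m.2.trans hmp⟩, hmp, hnp⟩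

theorem exists_mem_threads_extending [IsDirectedOrder Λ] [InverseSystem f] {k : Λ}
    {u : ∀ m : {m : Λ // k ≤ m}, Y m}
    (hu : u ∈ threads (Y := fun m : {m : Λ // k ≤ m} ↦ Y m) fun _ _ h ↦ f h) :
    ∃ v ∈ threads f, ∀ m : {m : Λ // k ≤ m}, v m = u m := by
  have := isDirectedOrder_subtype_ge k
  have map_eq_map {l : Λ} {m n : {m : Λ // k ≤ m}} (hm : l ≤ m) (hn : l ≤ n) :
      f hm (u m) = f hn (u n) := by
    obtain ⟨r, hmr, hnr⟩ := exists_ge_ge m n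
    rw [← hu m r hmr, ← hu n r hnr, InverseSystem.map_map (f := f),
      InverseSystem.map_map (f := f)]
  choose p hlp hkp using fun l ↦ exists_ge_ge l k
  refine ⟨fun l ↦ f (hlp l) (u ⟨p l, hkp l⟩), fun κ l h ↦ ?_, fun m ↦ ?_⟩
  · exact (InverseSystem.map_map (f := f) h (hlp l) _).trans
      (map_eq_map (m := ⟨p l, hkp l⟩) (n := ⟨p κ, hkp κ⟩) _ _)
  · exact hu m ⟨p m, hkp m⟩ (hlp m)

variable [∀ l, TopologicalSpace (Y l)]

theorem exists_mem_threads_of_isCompact [IsDirectedOrder Λ] [InverseSystem f]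
    [∀ l, T2Space (Y l)] (hf : ∀ κ l (h : κ ≤ l), Continuous (f h)) {K : ∀ l, Set (Y l)}
    (hK : ∀ l, IsCompact (K l)) (hne : ∀ l, (K l).Nonempty)
    (hmaps : ∀ κ l (h : κ ≤ l), MapsTo (f h) (K l) (K κ)) :
    ∃ u ∈ threads f, ∀ l, u l ∈ K l := by
  have (l : Λ) : CompactSpace (K l) := isCompact_iff_compactSpace.mp (hK l)
  have (l : Λ) : Nonempty (K l) := (hne l).to_subtype
  let F : Λᵒᵖ ⥤ TopCat.{max v u} :=
    { obj l := TopCat.of (ULift.{u} (K l.unop))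
      map φ := TopCat.ofHom
        ⟨ULift.map (hmaps _ _ (leOfHom φ.unop)).restrict,
          continuous_uliftUp.comp <|
            ((hf _ _ _).restrict (hmaps _ _ _)).comp continuous_uliftDown⟩
      map_id l := by
        ext x
        exact InverseSystem.map_self (f := f) x.down.1
      map_comp φ ψ := by
        ext x
        exact (InverseSystem.map_map (f := f) (leOfHom ψ.unop) (leOfHom φ.unop) x.down.1).symm }
  obtain ⟨u, hu⟩ := TopCat.nonempty_limitCone_of_compact_t2_cofiltered_system F
  exact ⟨fun l ↦ (u (.op l)).down, fun κ l h ↦ congr_arg (·.down.1) (hu (homOfLE h).op),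
    fun l ↦ (u (.op l)).down.2⟩

theorem exists_mem_threads_eval_eq [IsDirectedOrder Λ] [InverseSystem f] [∀ l, T2Space (Y l)]
    (hf : ∀ κ l (h : κ ≤ l), Continuous (f h)) {D : ∀ l, Set (Y l)}
    (hD : ∀ κ l (h : κ ≤ l), f h '' D l = D κ) {k : Λ} {d : Y k} (hd : d ∈ D k)
    (hfib : ∀ l (h : k ≤ l), IsCompact (D l ∩ f h ⁻¹' {d})) :
    ∃ u ∈ threads f, (∀ l, u l ∈ D l) ∧ u k = d := by
  have hmaps κ l (h : κ ≤ l) : MapsTo (f h) (D l) (D κ) := mapsTo_iff_image_subset.mpr (hD κ l h).le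
  have hne l (h : k ≤ l) : (D l ∩ f h ⁻¹' {d}).Nonempty := by
    rwa [← image_inter_nonempty_iff, hD, inter_singleton_nonempty]
  have := isDirectedOrder_subtype_ge k
  have : InverseSystem (F := fun m : {m : Λ // k ≤ m} ↦ Y m) fun _ _ h ↦ f h :=
    ⟨fun _ ↦ InverseSystem.map_self (f := f) (i := _),
      fun _ _ _ h₁ h₂ ↦ InverseSystem.map_map (f := f) h₁ h₂⟩
  obtain ⟨u, hu, huK⟩ := exists_mem_threads_of_isCompact
    (Y := fun m : {m : Λ // k ≤ m} ↦ Y m) (f := fun _ _ h ↦ f h)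
    (fun _ _ h ↦ hf _ _ h) (fun m ↦ hfib m m.2) (fun m ↦ hne m m.2)
    (fun m n h x hx ↦ ⟨hmaps _ _ h hx.1, (InverseSystem.map_map (f := f) m.2 h x).trans hx.2⟩)
  obtain ⟨v, hv, hvu⟩ := exists_mem_threads_extending hu
  refine ⟨v, hv, fun l ↦ ?_, ?_⟩
  · obtain ⟨p, hlp, hkp⟩ := exists_ge_ge l k
    rw [← hv l p hlp, hvu ⟨p, hkp⟩]
    exact hmaps l p hlp (huK ⟨p, hkp⟩).1
  · rw [← hv k k le_rfl, hvu ⟨k, le_rfl⟩]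
    exact (huK ⟨k, le_rfl⟩).2

theorem mem_nhds_threads_iff [IsDirectedOrder Λ] [Nonempty Λ]
    (hf : ∀ κ l (h : κ ≤ l), Continuous (f h)) {y : threads f} {U : Set (threads f)} :
    U ∈ 𝓝 y ↔ ∃ k, ∃ W ∈ 𝓝 (y.1 k), (fun z : threads f ↦ z.1 k) ⁻¹' W ⊆ U := by
  have hanti : Antitone fun k ↦ (𝓝 (y.1 k)).comap fun z : threads f ↦ z.1 k := by
    intro κ l h
    have eval_eq : (fun z : threads f ↦ z.1 κ) = f h ∘ fun z ↦ z.1 l :=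
      funext fun z ↦ (z.2 κ l h).symm
    simp only [eval_eq, ← Filter.comap_comap, ← y.2 κ l h]
    exact Filter.comap_mono (hf κ l h).continuousAt.le_comap
  rw [nhds_subtype, nhds_pi, Filter.pi, Filter.comap_iInf]
  simp only [Filter.comap_comap]
  exact Filter.mem_iInf_of_directed hanti.directed_ge U

theorem mem_closure_threads_iff [IsDirectedOrder Λ] [Nonempty Λ]
    (hf : ∀ κ l (h : κ ≤ l), Continuous (f h)) {S : Set (threads f)} {y : threads f} :
    y ∈ closure S ↔ ∀ k, y.1 k ∈ closure ((fun z : threads f ↦ z.1 k) '' S) := by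
  refine ⟨fun hy k ↦ map_mem_closure ((continuous_apply k).comp continuous_subtype_val) hy
    (mapsTo_image _ S), fun hy ↦ ?_⟩
  refine mem_closure_iff_nhds.mpr fun U hU ↦ ?_
  obtain ⟨k, W, hW, hWU⟩ := (mem_nhds_threads_iff hf).mp hU
  obtain ⟨_, hzW, z, hzS, rfl⟩ := mem_closure_iff_nhds.mp (hy k) W hW
  exact ⟨z, hWU hzW, hzS⟩

end InverseLimit

theorem stmt_12_general {Λ : Type*} [Preorder Λ] [IsDirectedOrder Λ] {Y : Λ → Type*}
    [∀ l, TopologicalSpace (Y l)] [∀ l, T2Space (Y l)] {f : ∀ ⦃κ l : Λ⦄, κ ≤ l → Y l → Y κ}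
    [InverseSystem f] (hf : ∀ κ l (h : κ ≤ l), Continuous (f h)) {D : ∀ l, Set (Y l)}
    (hdense : ∀ l, Dense (D l)) (hD : ∀ κ l (h : κ ≤ l), f h '' D l = D κ)
    (hfib : ∀ κ l (h : κ ≤ l), ∀ d ∈ D κ, IsCompact (D l ∩ f h ⁻¹' {d})) :
    Dense {y : threads f | ∀ l, y.1 l ∈ D l} := by
  intro y
  cases isEmpty_or_nonempty Λ
  · exact subset_closure isEmptyElim
  refine (mem_closure_threads_iff hf).mpr fun k ↦ closure_mono ?_ (hdense k (y.1 k))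
  intro d hd
  obtain ⟨u, hu, huD, rfl⟩ := exists_mem_threads_eval_eq hf hD hd fun l h ↦ hfib k l h d hd
  exact ⟨⟨u, hu⟩, huD, rfl⟩

/-- The density claim underlying Theorem 5.1: in an inverse system of compact Hausdorff
spaces over a directed index set, with dense subsets `D λ` mapped onto each other by the
bonding maps and with compact fibers over points of `D κ`, the threads lying in all the
`D λ` are dense in the inverse limit. -/
theorem stmt_12 {Λ : Type*} [PartialOrder Λ] [IsDirected Λ (· ≤ ·)]
    (Y : Λ → Type*) [∀ l, TopologicalSpace (Y l)] [∀ l, CompactSpace (Y l)]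
    [∀ l, T2Space (Y l)]
    (q : ∀ κ l, κ ≤ l → Y l → Y κ)
    (hqc : ∀ κ l (h : κ ≤ l), Continuous (q κ l h))
    (hid : ∀ l (h : l ≤ l), q l l h = id)
    (hcomp : ∀ κ l μ (h1 : κ ≤ l) (h2 : l ≤ μ),
      (q κ l h1) ∘ (q l μ h2) = q κ μ (h1.trans h2))
    (D : ∀ l, Set (Y l))
    (hdense : ∀ l, Dense (D l))
    (himg : ∀ κ l (h : κ ≤ l), q κ l h '' D l = D κ)
    (hfib : ∀ κ l (h : κ ≤ l), ∀ d ∈ D κ, IsCompact {y ∈ D l | q κ l h y = d}) :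
    Dense {y : {y : ∀ l, Y l // ∀ κ l (h : κ ≤ l), q κ l h (y l) = y κ} |
      ∀ l, y.1 l ∈ D l} := by
  have : InverseSystem fun κ l ↦ q κ l :=
    ⟨fun l ↦ congr_fun (hid l le_rfl), fun _ _ _ h1 h2 ↦ congr_fun (hcomp _ _ _ h1 h2)⟩
  exact stmt_12_general hqc hdense himg hfib
end

section
/- Let Y be a compact Hausdorff space and X ⊆ Y a dense open subset such that Y ∖ X is totally disconnected. Then every point y ∈ Y has a neighborhood basis consisting of open sets whose topological frontier is contained in X. -/
/-!
Let `Z = Xᶜ`. The point is to find, inside any neighborhood of `y`, a compact set `K` containing `y`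
such that `Z \ K` is closed: a singleton if `y ∉ Z`, and a compact open subset of the
zero-dimensional space `Z` otherwise. An open `V ⊇ K` whose closure avoids `Z \ K` then has frontier
disjoint from `Z`, since the part of `Z` in `closure V` is contained in `K`, hence in `V`.
-/

open Set TopologicalSpace Topology

theorem exists_isOpen_disjoint_frontier_of_isCompact {Y : Type*} [TopologicalSpace Y]
    [RegularSpace Y] {K Z U : Set Y} (hK : IsCompact K) (hU : IsOpen U) (hKU : K ⊆ U)
    (hZK : IsClosed (Z \ K)) :
    ∃ V, IsOpen V ∧ K ⊆ V ∧ closure V ⊆ U ∧ Disjoint (frontier V) Z := by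
  have hW : U ∩ (Z \ K)ᶜ ∈ 𝓝ˢ K :=
    (hU.inter hZK.isOpen_compl).mem_nhdsSet.2 fun x hx ↦ ⟨hKU hx, fun h ↦ h.2 hx⟩
  obtain ⟨V, hV, hKV, hVW⟩ := hK.exists_isOpen_closure_subset hW
  obtain ⟨hVU, hVZ⟩ := subset_inter_iff.1 hVW
  refine ⟨V, hV, hKV, hVU, disjoint_left.2 fun z hz hzZ ↦ ?_⟩
  rw [hV.frontier_eq] at hz
  exact hVZ hz.1 ⟨hzZ, fun hzK ↦ hz.2 (hKV hzK)⟩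

theorem prespectralSpace_of_totallyDisconnectedSpace (H : Type*) [TopologicalSpace H]
    [LocallyCompactSpace H] [T2Space H] [TotallyDisconnectedSpace H] : PrespectralSpace H where
  isTopologicalBasis := by
    refine isTopologicalBasis_of_isOpen_of_nhds (fun _ hC ↦ hC.1) fun x U hxU hU ↦ ?_
    obtain ⟨L, hL, hxL, hLU⟩ := exists_compact_subset hU hxU
    obtain ⟨C, hC, hxC, hCL⟩ := loc_compact_Haus_tot_disc_of_zero_dim.exists_subset_of_mem_open
      hxL isOpen_interior
    have hCL : C ⊆ L := hCL.trans interior_subset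
    exact ⟨C, ⟨hC.isOpen, hL.of_isClosed_subset hC.isClosed hCL⟩, hxC, hCL.trans hLU⟩

section LocallyCompact

variable {Y : Type*} [TopologicalSpace Y] [LocallyCompactSpace Y] [T2Space Y]

theorem exists_isCompact_isClosed_sdiff_of_isTotallyDisconnected {Z U : Set Y} {y : Y}
    (hZ : IsClosed Z) (htd : IsTotallyDisconnected Z) (hU : IsOpen U) (hyU : y ∈ U) :
    ∃ K, IsCompact K ∧ y ∈ K ∧ K ⊆ U ∧ IsClosed (Z \ K) := by
  by_cases hyZ : y ∈ Z
  · have : LocallyCompactSpace Z := hZ.locallyCompactSpace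
    have : TotallyDisconnectedSpace Z := totallyDisconnectedSpace_subtype_iff.2 htd
    have : PrespectralSpace Z := prespectralSpace_of_totallyDisconnectedSpace Z
    obtain ⟨C, ⟨hCopen, hCcompact⟩, hyC, hCU⟩ :=
      PrespectralSpace.isTopologicalBasis.exists_subset_of_mem_open
        (show (⟨y, hyZ⟩ : Z) ∈ Subtype.val ⁻¹' U from hyU) (hU.preimage continuous_subtype_val)
    refine ⟨Subtype.val '' C, hCcompact.image continuous_subtype_val, mem_image_of_mem _ hyC,
      image_subset_iff.2 hCU, ?_⟩
    have hsdiff : Z \ Subtype.val '' C = Subtype.val '' Cᶜ := by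
      rw [image_compl_eq_range_sdiff_image Subtype.val_injective, Subtype.range_coe]
    rw [hsdiff]
    exact hZ.isClosedMap_subtype_val _ hCopen.isClosed_compl
  · refine ⟨{y}, isCompact_singleton, mem_singleton y, singleton_subset_iff.2 hyU, ?_⟩
    rwa [sdiff_singleton_eq_self hyZ]

theorem stmt_14_general (X : Set Y) (hXopen : IsOpen X) (htd : IsTotallyDisconnected Xᶜ) (y : Y) :
    (𝓝 y).HasBasis (fun V : Set Y ↦ y ∈ V ∧ IsOpen V ∧ frontier V ⊆ X) id := by
  refine (nhds_basis_opens y).to_hasBasis ?_ fun V ⟨hyV, hV, _⟩ ↦ ⟨V, ⟨hyV, hV⟩, Subset.rfl⟩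
  rintro U ⟨hyU, hU⟩
  obtain ⟨K, hK, hyK, hKU, hXK⟩ :=
    exists_isCompact_isClosed_sdiff_of_isTotallyDisconnected hXopen.isClosed_compl htd hU hyU
  obtain ⟨V, hV, hKV, hVU, hVX⟩ := exists_isOpen_disjoint_frontier_of_isCompact hK hU hKU hXK
  exact ⟨V, ⟨hKV hyK, hV, disjoint_compl_right_iff_subset.1 hVX⟩, subset_closure.trans hVU⟩

end LocallyCompact

/-- Used in the proof of Proposition 1.1.3: in a compact Hausdorff space `Y` with a dense
open subset `X` whose complement is totally disconnected, every point has a neighborhood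
basis of open sets with frontier contained in `X`. -/
theorem stmt_14 {Y : Type*} [TopologicalSpace Y] [CompactSpace Y] [T2Space Y]
    (X : Set Y) (hXopen : IsOpen X) (hXdense : Dense X)
    (htd : IsTotallyDisconnected Xᶜ) (y : Y) :
    (nhds y).HasBasis (fun V : Set Y => y ∈ V ∧ IsOpen V ∧ frontier V ⊆ X) id :=
  stmt_14_general X hXopen htd y
end

section
/- Let X be a locally compact Hausdorff space on which the additive group ℝ acts continuously and properly, let x ∈ X, and let V ⊆ X be an open set whose topological frontier is compact. If t • x ∈ V for arbitrarily large t (frequently along atTop), then there exists t₀ such that t • x ∈ V for all t ≥ t₀ (eventually along atTop). -/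
open Filter

/-!
The orbit map `t ↦ t +ᵥ x` of a proper action is itself proper, so it leaves the compact frontier
of `V` for good after some time `M`. The orbit of the ray `[M, ∞)` is connected and avoids the
frontier, so it lies in `V` as soon as it meets `V`.
-/

section

open Set

variable {X : Type*} [TopologicalSpace X]

@[to_additive]
theorem isProperMap_smul_const {G : Type*} [TopologicalSpace G] [Group G] [MulAction G X]
    [ProperSMul G X] (x : X) : IsProperMap fun g : G ↦ g • x :=
  (isProperMap_fst_of_compactSpace.comp (ProperSMul.isProperMap_smul_pair_set (t := {x}))).comp
    (Homeomorph.prodUnique G ({x} : Set X)).symm.isProperMap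

theorem subset_of_isPreconnected_of_disjoint_frontier {s t : Set X} (hs : IsPreconnected s)
    (hdisj : Disjoint s (frontier t)) (hne : (s ∩ t).Nonempty) : s ⊆ t := by
  have hinterior : ∀ y ∈ s, y ∈ closure t → y ∈ interior t := fun y hys hyt ↦
    by_contra fun hy ↦ hdisj.notMem_of_mem_left hys ⟨hyt, hy⟩
  obtain ⟨y, hys, hyt⟩ := hne
  have hsub : s ⊆ interior t :=
    hs.subset_of_closure_inter_subset isOpen_interior
      ⟨y, hys, hinterior y hys (subset_closure hyt)⟩
      fun z ⟨hzt, hzs⟩ ↦ hinterior z hzs (closure_mono interior_subset hzt)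
  exact hsub.trans interior_subset

variable {α : Type*} [ConditionallyCompleteLinearOrder α] [TopologicalSpace α] [OrderTopology α]
  [DenselyOrdered α] {f : α → X} {V : Set X}

theorem eventually_mem_of_frequently_mem_of_eventually_notMem_frontier (hf : Continuous f)
    (hfrontier : ∀ᶠ t in atTop, f t ∉ frontier V) (hfreq : ∃ᶠ t in atTop, f t ∈ V) :
    ∀ᶠ t in atTop, f t ∈ V := by
  have : Nonempty α := hfreq.exists.nonempty
  obtain ⟨M, havoid⟩ := eventually_atTop.1 hfrontier
  obtain ⟨s, hsV, hMs⟩ := (hfreq.and_eventually (eventually_ge_atTop M)).exists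
  have hray : f '' Ici M ⊆ V :=
    subset_of_isPreconnected_of_disjoint_frontier (isPreconnected_Ici.image f hf.continuousOn)
      (disjoint_left.2 (forall_mem_image.2 havoid))
      ⟨f s, mem_image_of_mem f hMs, hsV⟩
  filter_upwards [eventually_ge_atTop M] with t ht
  exact hray (mem_image_of_mem f ht)

theorem eventually_mem_of_frequently_mem_of_isProperMap [NoMaxOrder α] (hf : IsProperMap f)
    (hV : IsCompact (frontier V)) (hfreq : ∃ᶠ t in atTop, f t ∈ V) :
    ∀ᶠ t in atTop, f t ∈ V := by
  have hleave : ∀ᶠ t in atTop, f t ∉ frontier V :=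
    atTop_le_cocompact (hf.isCompact_preimage hV).compl_mem_cocompact
  exact eventually_mem_of_frequently_mem_of_eventually_notMem_frontier hf.continuous hleave hfreq

end

theorem stmt_17_general {X : Type*} [TopologicalSpace X] [AddAction ℝ X] [ProperVAdd ℝ X]
    (x : X) (V : Set X) (hfr : IsCompact (frontier V))
    (hfreq : ∃ᶠ t : ℝ in atTop, t +ᵥ x ∈ V) :
    ∀ᶠ t : ℝ in atTop, t +ᵥ x ∈ V :=
  eventually_mem_of_frequently_mem_of_isProperMap (isProperMap_vadd_const x) hfr hfreq

/-- The orbit-connectedness argument from the Claim in Theorem 7.1(b): for a continuous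
proper action of `ℝ` on a locally compact Hausdorff space, if `t +ᵥ x` lies in an open set
`V` with compact frontier for arbitrarily large `t`, then it lies in `V` eventually. -/
theorem stmt_17 {X : Type*} [TopologicalSpace X] [T2Space X] [LocallyCompactSpace X]
    [AddAction ℝ X] [ContinuousVAdd ℝ X] [ProperVAdd ℝ X]
    (x : X) (V : Set X) (hV : IsOpen V) (hfr : IsCompact (frontier V))
    (hfreq : ∃ᶠ t : ℝ in atTop, t +ᵥ x ∈ V) :
    ∀ᶠ t : ℝ in atTop, t +ᵥ x ∈ V :=
  stmt_17_general x V hfr hfreq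
end
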